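/- Let ν be the standard Gaussian on ℝ^d and B₁, ..., B_K a partition with ν(∪_{j≠i} B_j) = Φ(a_{≠i}). Define r_Z(z) = dist(z, complement of the cell of z). Then E_{z~ν}[r_Z(z)] ≤ Σ_{i=1}^K [-a_{≠i}·Φ(-a_{≠i}) + e^{-a_{≠i}²/2}/√(2π)]. -/

import Mathlib

open Real Set MeasureTheory ProbabilityTheory

/-- The standard normal cumulative distribution function. -/
noncomputable def Phi (x : ℝ) : ℝ :=
  (Real.sqrt (2 * π))⁻¹ * ∫ u in Set.Iic x, Real.exp (-u ^ 2 / 2)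

/-- The inverse of the standard normal cdf. -/
noncomputable def PhiInv : ℝ → ℝ := Function.invFun Phi

/-- The standard Gaussian measure `N(0, I_d)` on `ℝ^d`. -/
noncomputable def stdGaussian (d : ℕ) : Measure (Fin d → ℝ) :=
  Measure.pi fun _ => gaussianReal 0 1

/-- The Euclidean (ℓ₂) norm on `ℝ^d`. -/
noncomputable def l2 {d : ℕ} (z : Fin d → ℝ) : ℝ := Real.sqrt (∑ i, z i ^ 2)

/-- The ℓ₂ distance from a point to a set. -/
noncomputable def distSet {d : ℕ} (z : Fin d → ℝ) (A : Set (Fin d → ℝ)) : ℝ :=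
  sInf {t | ∃ z' ∈ A, t = l2 (z - z')}

/-!
Let `I p = φ (Φ⁻¹ p)` and let `Ψ p` be the Gaussian excess at the level `Φ⁻¹ p`, so that
`Ψ'' = Ψ / I ^ 2`. If `w` is `l`-Lipschitz and `f = Φ ∘ w`, then the Ornstein–Uhlenbeck evolution
`P τ f` (`τ = 0` is the identity, `τ = 1` the mean) has `Φ⁻¹ ∘ P τ f` Lipschitz with constant
`l √(1 - τ) / √(1 + l² τ)`: by the Neyman–Pearson lemma a Gaussian shift by `θ` moves `Φ⁻¹` of a
mean by at most `‖θ‖`. This is the gradient bound that makes `√(1 + l² τ) ∫ Ψ (P τ f) dγ` increasing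
in `τ`. Take `w = l (t - F)` with `F` the distance to the complement of a cell; the endpoints
`τ = 0, 1` compare `l (∫ F dγ - t)` with `√(1 + l²) Ψ (Φ(l t) Φ(a))`, and `l → ∞`, `t → 0` bound
`∫ F dγ` by the excess at level `a`. The cells then add up.
-/

open Filter
open scoped Topology RealInnerProductSpace

local notation "φ" => gaussianPDFReal 0 1
local notation "γ" => ProbabilityTheory.stdGaussian

/-! ### The standard normal distribution function -/

theorem gaussianPDFReal_zero_one_apply (x : ℝ) : φ x = (√(2 * π))⁻¹ * rexp (-x ^ 2 / 2) := by
  simp [gaussianPDFReal]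

theorem gaussianPDFReal_zero_one_pos (x : ℝ) : 0 < φ x :=
  gaussianPDFReal_pos _ _ _ one_ne_zero

theorem gaussianPDFReal_zero_one_le_one (x : ℝ) : φ x ≤ 1 := by
  rw [gaussianPDFReal_zero_one_apply]
  have hexp : rexp (-x ^ 2 / 2) ≤ 1 := Real.exp_le_one_iff.2 (by nlinarith [sq_nonneg x])
  have hsqrt : (√(2 * π))⁻¹ ≤ 1 :=
    inv_le_one_of_one_le₀ (Real.one_le_sqrt.2 (by nlinarith [Real.pi_gt_three]))
  exact mul_le_one₀ hsqrt (Real.exp_pos _).le hexp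

theorem hasDerivAt_gaussianPDFReal_zero_one (x : ℝ) : HasDerivAt φ (-x * φ x) x := by
  have hexponent : HasDerivAt (fun x : ℝ => -x ^ 2 / 2) (-x) x :=
    ((hasDerivAt_pow 2 x).neg.div_const 2).congr_deriv (by norm_num; ring)
  rw [funext gaussianPDFReal_zero_one_apply]
  exact (hexponent.exp.const_mul _).congr_deriv (by ring)

@[fun_prop]
theorem continuous_gaussianPDFReal_zero_one : Continuous φ :=
  continuous_iff_continuousAt.2 fun x => (hasDerivAt_gaussianPDFReal_zero_one x).continuousAt

theorem Phi_eq_integral (x : ℝ) : Phi x = ∫ u in Iic x, φ u := by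
  simp only [gaussianPDFReal_zero_one_apply, integral_const_mul, Phi]

theorem Phi_eq_cdf : Phi = cdf (gaussianReal 0 1) := by
  ext x
  rw [cdf_eq_real, Phi_eq_integral, Measure.real, gaussianReal_apply_eq_integral _ one_ne_zero,
    ENNReal.toReal_ofReal (integral_nonneg fun _ => gaussianPDFReal_nonneg _ _ _)]

theorem Phi_eq_real (x : ℝ) : Phi x = (gaussianReal 0 1).real (Iic x) := by
  rw [Phi_eq_cdf, cdf_eq_real]

theorem hasDerivAt_Phi (x : ℝ) : HasDerivAt Phi (φ x) x := by
  have hint (y : ℝ) : IntegrableOn φ (Iic y) := (integrable_gaussianPDFReal 0 1).integrableOn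
  have hFTC : Phi = fun y => Phi 0 + ∫ u in (0 : ℝ)..y, φ u := by
    funext y
    rw [← intervalIntegral.integral_Iic_sub_Iic (hint 0) (hint y), Phi_eq_integral,
      Phi_eq_integral, add_sub_cancel]
  rw [hFTC]
  exact (intervalIntegral.integral_hasDerivAt_right
    (continuous_gaussianPDFReal_zero_one.intervalIntegrable _ _)
    (continuous_gaussianPDFReal_zero_one.stronglyMeasurableAtFilter _ _)
    continuous_gaussianPDFReal_zero_one.continuousAt).const_add _

@[fun_prop]
theorem continuous_Phi : Continuous Phi :=
  continuous_iff_continuousAt.2 fun x => (hasDerivAt_Phi x).continuousAt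

theorem lipschitzWith_Phi : LipschitzWith 1 Phi :=
  lipschitzWith_of_nnnorm_deriv_le (fun x => (hasDerivAt_Phi x).differentiableAt) fun x => by
    rw [(hasDerivAt_Phi x).deriv, ← NNReal.coe_le_coe, coe_nnnorm, Real.norm_eq_abs,
      abs_of_pos (gaussianPDFReal_zero_one_pos x)]
    exact gaussianPDFReal_zero_one_le_one x

theorem strictMono_Phi : StrictMono Phi :=
  strictMono_of_deriv_pos fun x => by
    rw [(hasDerivAt_Phi x).deriv]; exact gaussianPDFReal_zero_one_pos x

theorem tendsto_Phi_atTop : Tendsto Phi atTop (𝓝 1) := by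
  rw [Phi_eq_cdf]; exact tendsto_cdf_atTop _

theorem tendsto_Phi_atBot : Tendsto Phi atBot (𝓝 0) := by
  rw [Phi_eq_cdf]; exact tendsto_cdf_atBot _

theorem Phi_neg (x : ℝ) : Phi (-x) = 1 - Phi x := by
  have : NullSingletonClass (gaussianReal 0 1) := nullSingletonClass_gaussianReal one_ne_zero
  have hsymm : (gaussianReal 0 1).map (fun y => -y) = gaussianReal 0 1 := by
    rw [gaussianReal_map_neg, neg_zero]
  have hpre : (fun y : ℝ => -y) ⁻¹' Iic (-x) = Ici x := by ext y; simp
  calc Phi (-x) = (gaussianReal 0 1).real (Ici x) := by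
        rw [Phi_eq_real, ← hpre, ← map_measureReal_apply measurable_neg measurableSet_Iic, hsymm]
    _ = (gaussianReal 0 1).real (Iic x)ᶜ := by
        rw [compl_Iic]; exact measureReal_congr Ioi_ae_eq_Ici.symm
    _ = 1 - Phi x := by rw [probReal_compl_eq_one_sub measurableSet_Iic, Phi_eq_real]

theorem Phi_mem_Ioo (x : ℝ) : Phi x ∈ Ioo (0 : ℝ) 1 := by
  have hpos (y : ℝ) : 0 < Phi y :=
    lt_of_le_of_lt (by rw [Phi_eq_real]; exact measureReal_nonneg)
      (strictMono_Phi (sub_one_lt y))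
  exact ⟨hpos x, by linarith [hpos (-x), Phi_neg x]⟩

theorem range_Phi : range Phi = Ioo 0 1 := by
  refine Subset.antisymm (range_subset_iff.2 Phi_mem_Ioo) fun p ⟨h0, h1⟩ => ?_
  obtain ⟨a, ha⟩ := (tendsto_Phi_atBot.eventually (gt_mem_nhds h0)).exists
  obtain ⟨b, hb⟩ := (tendsto_Phi_atTop.eventually (lt_mem_nhds h1)).exists
  exact mem_range_of_exists_le_of_exists_ge continuous_Phi ⟨a, ha.le⟩ ⟨b, hb.le⟩

theorem PhiInv_Phi (x : ℝ) : PhiInv (Phi x) = x :=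
  Function.leftInverse_invFun strictMono_Phi.injective x

theorem Phi_PhiInv {p : ℝ} (hp : p ∈ Ioo (0 : ℝ) 1) : Phi (PhiInv p) = p :=
  Function.invFun_eq (by rwa [← range_Phi] at hp)

theorem monotoneOn_PhiInv : MonotoneOn PhiInv (Ioo 0 1) := fun p hp r hr hpr => by
  rwa [← strictMono_Phi.le_iff_le, Phi_PhiInv hp, Phi_PhiInv hr]

theorem continuousAt_PhiInv {p : ℝ} (hp : p ∈ Ioo (0 : ℝ) 1) : ContinuousAt PhiInv p := by
  have himage : PhiInv '' Ioo 0 1 = univ :=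
    eq_univ_of_forall fun x => ⟨Phi x, Phi_mem_Ioo x, PhiInv_Phi x⟩
  exact continuousAt_of_monotoneOn_of_image_mem_nhds monotoneOn_PhiInv
    (isOpen_Ioo.mem_nhds hp) (himage ▸ univ_mem)

theorem hasDerivAt_PhiInv {p : ℝ} (hp : p ∈ Ioo (0 : ℝ) 1) :
    HasDerivAt PhiInv (φ (PhiInv p))⁻¹ p :=
  HasDerivAt.of_local_left_inverse (continuousAt_PhiInv hp) (hasDerivAt_Phi _)
    (gaussianPDFReal_zero_one_pos _).ne'
    (eventually_of_mem (isOpen_Ioo.mem_nhds hp) fun _ => Phi_PhiInv)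

/-- The expected excess `E (X - a)₊` of a standard normal variable over the level `a`, in closed
form; the right-hand side of the theorem is a sum of these. -/
noncomputable def gaussianExcess (a : ℝ) : ℝ := -a * Phi (-a) + φ a

theorem hasDerivAt_gaussianExcess (a : ℝ) : HasDerivAt gaussianExcess (-Phi (-a)) a := by
  have hcomp : HasDerivAt (fun x => Phi (-x)) (-φ (-a)) a :=
    ((hasDerivAt_Phi (-a)).scomp a (hasDerivAt_neg a)).congr_deriv (by simp)
  have heven : φ (-a) = φ a := by simp [gaussianPDFReal_zero_one_apply]
  exact (((hasDerivAt_neg a).mul hcomp).add (hasDerivAt_gaussianPDFReal_zero_one a)).congr_deriv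
    (by rw [heven]; ring)

@[fun_prop]
theorem continuous_gaussianExcess : Continuous gaussianExcess :=
  continuous_iff_continuousAt.2 fun a => (hasDerivAt_gaussianExcess a).continuousAt

theorem antitone_gaussianExcess : Antitone gaussianExcess :=
  antitone_of_hasDerivAt_nonpos hasDerivAt_gaussianExcess fun a => by
    simpa using (Phi_mem_Ioo (-a)).1.le

theorem gaussianExcess_nonneg (a : ℝ) : 0 ≤ gaussianExcess a := by
  have hderiv (x : ℝ) : HasDerivAt (fun x => φ x + a * Phi x) ((a - x) * φ x) x :=
    ((hasDerivAt_gaussianPDFReal_zero_one x).add ((hasDerivAt_Phi x).const_mul a)).congr_deriv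
      (by ring)
  have hanti : AntitoneOn (fun x => φ x + a * Phi x) (Ici a) :=
    antitoneOn_of_hasDerivWithinAt_nonpos (convex_Ici a)
      (fun x _ => (hderiv x).continuousAt.continuousWithinAt)
      (fun x _ => (hderiv x).hasDerivWithinAt) fun x hx => by
        rw [interior_Ici, mem_Ioi] at hx
        exact mul_nonpos_of_nonpos_of_nonneg (by linarith) (gaussianPDFReal_zero_one_pos x).le
  have hlim : a * 1 ≤ φ a + a * Phi a :=
    le_of_tendsto (tendsto_Phi_atTop.const_mul a) <| (eventually_ge_atTop a).mono fun r hr =>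
      (le_add_of_nonneg_left (gaussianPDFReal_zero_one_pos r).le).trans
        (hanti self_mem_Ici hr hr)
  rw [gaussianExcess, Phi_neg]
  linarith

theorem neg_le_gaussianExcess (a : ℝ) : -a ≤ gaussianExcess a := by
  have hrefl : gaussianExcess (-a) = gaussianExcess a + a := by
    simp only [gaussianExcess, gaussianPDFReal_zero_one_apply, neg_neg, neg_sq, Phi_neg]; ring
  linarith [gaussianExcess_nonneg (-a)]

/-- `gaussianExcess` as a function of the probability level `p = Phi a`. -/
noncomputable def excessProfile (p : ℝ) : ℝ := gaussianExcess (PhiInv p)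

theorem excessProfile_Phi (a : ℝ) : excessProfile (Phi a) = gaussianExcess a := by
  rw [excessProfile, PhiInv_Phi]

theorem antitoneOn_excessProfile : AntitoneOn excessProfile (Ioo 0 1) :=
  antitone_gaussianExcess.comp_monotoneOn monotoneOn_PhiInv

theorem hasDerivAt_excessProfile {p : ℝ} (hp : p ∈ Ioo (0 : ℝ) 1) :
    HasDerivAt excessProfile ((p - 1) / φ (PhiInv p)) p :=
  ((hasDerivAt_gaussianExcess (PhiInv p)).comp p (hasDerivAt_PhiInv hp)).congr_deriv (by
    rw [Phi_neg, Phi_PhiInv hp, neg_sub, div_eq_mul_inv])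

theorem hasDerivAt_deriv_excessProfile {p : ℝ} (hp : p ∈ Ioo (0 : ℝ) 1) :
    HasDerivAt (fun p => (p - 1) / φ (PhiInv p)) (excessProfile p / φ (PhiInv p) ^ 2) p := by
  have hφ := (gaussianPDFReal_zero_one_pos (PhiInv p)).ne'
  have hdensity : HasDerivAt (fun p => φ (PhiInv p)) (-PhiInv p) p :=
    ((hasDerivAt_gaussianPDFReal_zero_one (PhiInv p)).comp p (hasDerivAt_PhiInv hp)).congr_deriv
      (mul_inv_cancel_right₀ hφ _)
  refine (((hasDerivAt_id p).sub_const 1).div hdensity hφ).congr_deriv ?_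
  rw [excessProfile, gaussianExcess, Phi_neg, Phi_PhiInv hp, id]
  ring

/-! ### Gaussian shifts -/

theorem stdGaussian_real : γ ℝ = gaussianReal 0 1 := by
  refine Measure.ext_of_charFun (funext fun t => ?_)
  rw [charFun_stdGaussian, charFun_gaussianReal]
  congr 1
  norm_cast
  simp [neg_div]

theorem gaussianPDFReal_mul_le_mul_of_le {b r x : ℝ} (hr : 0 ≤ r) (hx : x ≤ b) :
    φ (b + r) * φ x ≤ φ (x + r) * φ b := by
  simp only [gaussianPDFReal_zero_one_apply]
  rw [mul_mul_mul_comm, mul_mul_mul_comm _ (rexp (-(x + r) ^ 2 / 2)), ← Real.exp_add,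
    ← Real.exp_add]
  exact mul_le_mul_of_nonneg_left (Real.exp_le_exp.2 (by nlinarith)) (by positivity)

theorem integral_gaussianReal_comp_sub (f : ℝ → ℝ) (r : ℝ) :
    ∫ x, f (x - r) ∂(gaussianReal 0 1) = ∫ x, φ (x + r) * f x := by
  rw [integral_gaussianReal_eq_integral_smul one_ne_zero,
    ← integral_sub_right_eq_self (fun x => φ (x + r) * f x) r]
  simp only [sub_add_cancel, smul_eq_mul]

theorem gaussianPDFReal_mul_sub_indicator_le {b r : ℝ} (hr : 0 ≤ r) {y : ℝ}
    (hy : y ∈ Icc (0 : ℝ) 1) (x : ℝ) :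
    φ b * (φ (x + r) * (y - (Iic b).indicator 1 x)) ≤
      φ (b + r) * (φ x * (y - (Iic b).indicator 1 x)) := by
  rw [← mul_assoc, ← mul_assoc, mul_comm (φ b)]
  rcases le_or_gt x b with hx | hx
  · rw [indicator_of_mem (mem_Iic.2 hx), Pi.one_apply]
    exact mul_le_mul_of_nonpos_right (gaussianPDFReal_mul_le_mul_of_le hr hx)
      (sub_nonpos.2 hy.2)
  · rw [indicator_of_notMem (notMem_Iic.2 hx), sub_zero, mul_comm (φ (b + r))]
    exact mul_le_mul_of_nonneg_right
      ((gaussianPDFReal_mul_le_mul_of_le hr hx.le).trans_eq (mul_comm _ _)) hy.1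

/- The Neyman–Pearson lemma for a translate of the Gaussian: since the likelihood ratio
`φ (x + r) / φ x` decreases, no test of the same mean gains more than a half-line. -/
theorem integral_gaussianReal_comp_sub_le {f : ℝ → ℝ} (hf : Measurable f)
    (hf01 : ∀ x, f x ∈ Icc (0 : ℝ) 1) {b r : ℝ} (hr : 0 ≤ r)
    (hb : ∫ x, f x ∂(gaussianReal 0 1) ≤ Phi b) :
    ∫ x, f (x - r) ∂(gaussianReal 0 1) ≤ Phi (b + r) := by
  set s : ℝ → ℝ := (Iic b).indicator 1
  have hs : Measurable s := measurable_one.indicator measurableSet_Iic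
  have hs01 (x : ℝ) : s x ∈ Icc (0 : ℝ) 1 :=
    ⟨indicator_nonneg (fun _ _ => zero_le_one) x, indicator_le_self' (fun _ _ => zero_le_one) x⟩
  have hs_shift (t : ℝ) : ∫ x, s (x - t) ∂(gaussianReal 0 1) = Phi (b + t) := by
    have : (fun x => s (x - t)) = (Iic (b + t)).indicator 1 := by
      ext x; simp [s, indicator]
    rw [this, integral_indicator_one measurableSet_Iic, Phi_eq_real]
  have hint {g : ℝ → ℝ} (hg : Measurable g) (hg01 : ∀ x, g x ∈ Icc (0 : ℝ) 1) (t : ℝ) :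
      Integrable (fun x => g (x - t)) (gaussianReal 0 1) :=
    .of_mem_Icc 0 1 (by fun_prop) (Eventually.of_forall fun x => hg01 (x - t))
  have hsub (t : ℝ) : ∫ x, f (x - t) - s (x - t) ∂(gaussianReal 0 1) =
      ∫ x, f (x - t) ∂(gaussianReal 0 1) - Phi (b + t) := by
    rw [integral_sub (hint hf hf01 t) (hint hs hs01 t), hs_shift]
  have hdensity (t : ℝ) : Integrable fun x => φ (x + t) * (f x - s x) :=
    ((integrable_gaussianPDFReal 0 1).comp_add_right t).mul_bdd (c := 1)
      (by fun_prop) (Eventually.of_forall fun x => by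
        rw [Real.norm_eq_abs, abs_le]
        constructor <;> linarith [(hf01 x).1, (hf01 x).2, (hs01 x).1, (hs01 x).2])
  have hmono : φ b * ∫ x, f (x - r) - s (x - r) ∂(gaussianReal 0 1) ≤
      φ (b + r) * ∫ x, f (x - 0) - s (x - 0) ∂(gaussianReal 0 1) := by
    rw [integral_gaussianReal_comp_sub (fun x => f x - s x) r,
      integral_gaussianReal_comp_sub (fun x => f x - s x) 0, ← integral_const_mul,
      ← integral_const_mul]
    exact integral_mono ((hdensity r).const_mul _) ((hdensity 0).const_mul _) fun x => by
      simpa only [add_zero] using gaussianPDFReal_mul_sub_indicator_le hr (hf01 x) x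
  rw [hsub, hsub] at hmono
  simp only [sub_zero, add_zero] at hmono
  have hφ := gaussianPDFReal_zero_one_pos b
  nlinarith [gaussianPDFReal_zero_one_pos (b + r)]

section

variable {E F V : Type*}
  [NormedAddCommGroup E] [InnerProductSpace ℝ E] [FiniteDimensional ℝ E]
  [MeasurableSpace E] [BorelSpace E]
  [NormedAddCommGroup F] [InnerProductSpace ℝ F] [FiniteDimensional ℝ F]
  [MeasurableSpace F] [BorelSpace F]
  [NormedAddCommGroup V] [InnerProductSpace ℝ V] [FiniteDimensional ℝ V]
  [MeasurableSpace V] [BorelSpace V]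

theorem stdGaussian_prod_map_eq {A : E × F → V} (hA : Measurable A) {B₁ : V → E} {B₂ : V → F}
    (hAB : ∀ x y v, ⟪A (x, y), v⟫ = ⟪x, B₁ v⟫ + ⟪y, B₂ v⟫)
    (hB : ∀ v, ‖B₁ v‖ ^ 2 + ‖B₂ v‖ ^ 2 = ‖v‖ ^ 2) : ((γ E).prod (γ F)).map A = γ V := by
  refine Measure.ext_of_charFun (funext fun v => ?_)
  have hsplit (p : E × F) : Complex.exp (⟪A p, v⟫ * Complex.I) =
      Complex.exp (⟪p.1, B₁ v⟫ * Complex.I) * Complex.exp (⟪p.2, B₂ v⟫ * Complex.I) := by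
    rw [← Complex.exp_add, ← add_mul, hAB, Complex.ofReal_add]
  rw [charFun_apply, integral_map hA.aemeasurable (by fun_prop)]
  simp only [hsplit]
  rw [integral_prod_mul (fun x => Complex.exp (⟪x, B₁ v⟫ * Complex.I))
    (fun y => Complex.exp (⟪y, B₂ v⟫ * Complex.I)), ← charFun_apply, ← charFun_apply,
    charFun_stdGaussian, charFun_stdGaussian, charFun_stdGaussian, ← Complex.exp_add,
    ← Complex.ofReal_pow ‖v‖, ← hB v]
  push_cast
  ring_nf

theorem stdGaussian_prod_map_toLp :
    ((γ E).prod (γ F)).map (WithLp.toLp 2) = γ (WithLp 2 (E × F)) :=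
  stdGaussian_prod_map_eq (by fun_prop) (B₁ := fun v => v.fst) (B₂ := fun v => v.snd)
    (fun _ _ _ => WithLp.prod_inner_apply _ _) fun v => (WithLp.prod_norm_sq_eq_of_L2 v).symm

theorem stdGaussian_prod_map_smul_add_smul {α β : ℝ} (h : α ^ 2 + β ^ 2 = 1) :
    ((γ E).prod (γ E)).map (fun p => α • p.1 + β • p.2) = γ E :=
  stdGaussian_prod_map_eq (by fun_prop) (B₁ := fun v => α • v) (B₂ := fun v => β • v)
    (fun x y v => by simp only [inner_add_left, real_inner_smul_left, real_inner_smul_right])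
    fun v => by simp only [norm_smul, mul_pow, Real.norm_eq_abs, sq_abs, ← add_mul, h, one_mul]

theorem stdGaussian_prod_map_resample {u : E} (hu : ‖u‖ = 1) :
    ((γ E).prod (gaussianReal 0 1)).map (fun p => p.1 + (p.2 - ⟪u, p.1⟫) • u) = γ E := by
  rw [← stdGaussian_real]
  refine stdGaussian_prod_map_eq (by fun_prop) (B₁ := fun v => v - ⟪u, v⟫ • u)
    (B₂ := fun v => ⟪u, v⟫) (fun x y v => ?_) fun v => ?_
  · simp only [inner_add_left, inner_sub_right, real_inner_smul_left, real_inner_smul_right,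
      real_inner_comm u x, RCLike.inner_apply, conj_trivial]
    ring
  · rw [norm_sub_sq_real, real_inner_smul_right, norm_smul, hu, Real.norm_eq_abs, mul_one,
      sq_abs, real_inner_comm u v]
    ring

theorem integral_integral_resample {u : E} (hu : ‖u‖ = 1) {f : E → ℝ} (hf : Integrable f (γ E)) :
    ∫ ξ, ∫ z, f (z + (ξ - ⟪u, z⟫) • u) ∂γ E ∂(gaussianReal 0 1) = ∫ x, f x ∂γ E := by
  have hmap := stdGaussian_prod_map_resample hu
  rw [← hmap] at hf
  conv_rhs => rw [← hmap, integral_map (by fun_prop) hf.aestronglyMeasurable]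
  exact (integral_prod_symm _ (hf.comp_measurable (by fun_prop))).symm

theorem integral_stdGaussian_comp_add_le {f : E → ℝ} (hf : Measurable f)
    (hf01 : ∀ x, f x ∈ Icc (0 : ℝ) 1) {b : ℝ} (hb : ∫ x, f x ∂γ E ≤ Phi b) (θ : E) :
    ∫ x, f (x + θ) ∂γ E ≤ Phi (b + ‖θ‖) := by
  rcases eq_or_ne θ 0 with rfl | hθ
  · simpa using hb
  have hint (f : E → ℝ) (hf : Measurable f) (hf01 : ∀ x, f x ∈ Icc (0 : ℝ) 1) :
      Integrable f (γ E) :=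
    .of_mem_Icc 0 1 hf.aemeasurable (Eventually.of_forall hf01)
  set u : E := -(‖θ‖⁻¹ • θ)
  have hu : ‖u‖ = 1 := by rw [norm_neg]; exact norm_smul_inv_norm (𝕜 := ℝ) hθ
  have hθu : θ = -(‖θ‖ • u) := by rw [smul_neg, smul_inv_smul₀ (norm_ne_zero_iff.2 hθ), neg_neg]
  set g : ℝ → ℝ := fun ξ => ∫ z, f (z + (ξ - ⟪u, z⟫) • u) ∂γ E
  have hg : Measurable g :=
    (StronglyMeasurable.integral_prod_right' (f := fun p : ℝ × E => f (p.2 + (p.1 - ⟪u, p.2⟫) • u))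
      (hf.comp (by fun_prop)).stronglyMeasurable).measurable
  have hg01 (ξ : ℝ) : g ξ ∈ Icc (0 : ℝ) 1 :=
    ⟨integral_nonneg fun _ => (hf01 _).1, by
      simpa using integral_mono (hint _ (hf.comp (by fun_prop)) fun _ => hf01 _)
        (integrable_const (1 : ℝ)) fun _ => (hf01 _).2⟩
  calc ∫ x, f (x + θ) ∂γ E
      = ∫ ξ, g (ξ - ‖θ‖) ∂(gaussianReal 0 1) := by
        rw [← integral_integral_resample hu (f := fun x => f (x + θ))
          (hint _ (hf.comp (by fun_prop)) fun _ => hf01 _)]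
        congr! 5 with ξ z
        conv_lhs => rw [hθu]
        module
    _ ≤ Phi (b + ‖θ‖) := integral_gaussianReal_comp_sub_le hg hg01 (norm_nonneg θ)
        ((integral_integral_resample hu (hint f hf hf01)).trans_le hb)

theorem integral_Phi_comp_eq {w : E → ℝ} (hw : Measurable w) :
    ∫ x, Phi (w x) ∂γ E =
      ∫ v, {v | v.snd ≤ w v.fst}.indicator 1 v ∂γ (WithLp 2 (E × ℝ)) := by
  have hset : MeasurableSet {v : WithLp 2 (E × ℝ) | v.snd ≤ w v.fst} :=
    measurableSet_le (by fun_prop) (by fun_prop)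
  have hint : Integrable ({v : WithLp 2 (E × ℝ) | v.snd ≤ w v.fst}.indicator
      (1 : WithLp 2 (E × ℝ) → ℝ)) (γ (WithLp 2 (E × ℝ))) :=
    (integrable_const (1 : ℝ)).indicator hset
  rw [← stdGaussian_prod_map_toLp] at hint ⊢
  rw [integral_map (by fun_prop) hint.aestronglyMeasurable]
  refine Eq.trans ?_ (integral_prod _ (hint.comp_measurable (by fun_prop))).symm
  rw [stdGaussian_real]
  congr! 2 with x
  rw [Phi_eq_real, ← integral_indicator_one measurableSet_Iic]
  rfl

theorem integral_Phi_comp_add_le {w : E → ℝ} (hw : Measurable w) {b : ℝ}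
    (hb : ∫ x, Phi (w x) ∂γ E ≤ Phi b) (θ : E) (η : ℝ) :
    ∫ x, Phi (w (x + θ) + η) ∂γ E ≤ Phi (b + √(‖θ‖ ^ 2 + η ^ 2)) := by
  have hset : MeasurableSet {v : WithLp 2 (E × ℝ) | v.snd ≤ w v.fst} :=
    measurableSet_le (by fun_prop) (by fun_prop)
  rw [integral_Phi_comp_eq hw] at hb
  have hshift := integral_stdGaussian_comp_add_le (measurable_one.indicator hset)
    (fun v => ⟨indicator_nonneg (fun _ _ => zero_le_one) v,
      indicator_le_self' (fun _ _ => zero_le_one) v⟩) hb (WithLp.toLp 2 (θ, -η))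
  rw [WithLp.prod_norm_eq_of_L2] at hshift
  rw [integral_Phi_comp_eq (by fun_prop)]
  simpa [indicator, ← sub_eq_add_neg, sub_le_iff_le_add] using hshift

end

/-! ### The Ornstein–Uhlenbeck semigroup -/

section

variable {E : Type*} [NormedAddCommGroup E] [InnerProductSpace ℝ E] [FiniteDimensional ℝ E]
  [MeasurableSpace E] [BorelSpace E] {f w : E → ℝ} {p₀ p₁ τ z : ℝ}

theorem integral_mem_Icc {X : Type*} [MeasurableSpace X] {μ : Measure X}
    [IsProbabilityMeasure μ] {f : X → ℝ} (hf : AEMeasurable f μ) (hmem : ∀ x, f x ∈ Icc p₀ p₁) :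
    ∫ x, f x ∂μ ∈ Icc p₀ p₁ :=
  (convex_Icc p₀ p₁).integral_mem isClosed_Icc (Eventually.of_forall hmem)
    (.of_mem_Icc p₀ p₁ hf (Eventually.of_forall hmem))

theorem integral_mem_Ioo {X : Type*} [MeasurableSpace X] {μ : Measure X}
    [IsProbabilityMeasure μ] {f : X → ℝ} (hf : AEMeasurable f μ) (hmem : ∀ x, f x ∈ Ioo p₀ p₁) :
    ∫ x, f x ∂μ ∈ Ioo p₀ p₁ := by
  have hint : Integrable f μ :=
    .of_mem_Icc p₀ p₁ hf (Eventually.of_forall fun x => Ioo_subset_Icc_self (hmem x))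
  have hpos {g : X → ℝ} (hg : Integrable g μ) (hg0 : ∀ x, 0 < g x) : 0 < ∫ x, g x ∂μ := by
    rw [integral_pos_iff_support_of_nonneg (fun x => (hg0 x).le) hg,
      Function.support_eq_univ fun x => (hg0 x).ne']
    simp
  have hleft := hpos (hint.sub (integrable_const p₀)) fun x => sub_pos.2 (hmem x).1
  have hright := hpos ((integrable_const p₁).sub hint) fun x => sub_pos.2 (hmem x).2
  simp only [Pi.sub_apply, integral_sub hint (integrable_const p₀),
    integral_sub (integrable_const p₁) hint, integral_const, probReal_univ, one_smul,
    sub_pos] at hleft hright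
  exact ⟨hleft, hright⟩

/-- The Ornstein–Uhlenbeck semigroup in Mehler's form, with time `t` encoded by
`τ = 1 - exp (-2 * t)`: `τ = 0` is the identity and `τ = 1` the Gaussian mean. -/
noncomputable def mehler (τ : ℝ) (f : E → ℝ) (x : E) : ℝ := ∫ g, f (√(1 - τ) • x + √τ • g) ∂γ E

theorem mehler_zero (f : E → ℝ) : mehler 0 f = f := by
  ext x; simp [mehler]

omit [BorelSpace E] in
theorem mehler_one (f : E → ℝ) (x : E) : mehler 1 f x = ∫ y, f y ∂γ E := by
  simp [mehler]

theorem mehler_mem_Icc (hf : Measurable f) (hmem : ∀ x, f x ∈ Icc p₀ p₁) (τ : ℝ) (x : E) :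
    mehler τ f x ∈ Icc p₀ p₁ :=
  integral_mem_Icc (by fun_prop) fun _ => hmem _

theorem continuous_mehler (hf : Continuous f) (hmem : ∀ x, f x ∈ Icc p₀ p₁) :
    Continuous fun q : ℝ × E => mehler q.1 f q.2 :=
  continuous_of_dominated (bound := fun _ => max |p₀| |p₁|) (fun _ => by fun_prop)
    (fun _ => Eventually.of_forall fun _ => abs_le_max_abs_abs (hmem _).1 (hmem _).2)
    (integrable_const _) (Eventually.of_forall fun _ => by fun_prop)

theorem integral_integral_smul_add_smul {α β : ℝ} (h : α ^ 2 + β ^ 2 = 1)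
    (hf : Integrable f (γ E)) :
    ∫ x, ∫ g, f (α • x + β • g) ∂γ E ∂γ E = ∫ x, f x ∂γ E := by
  have hmap := stdGaussian_prod_map_smul_add_smul (E := E) h
  rw [← hmap] at hf
  conv_rhs => rw [← hmap, integral_map (by fun_prop) hf.aestronglyMeasurable]
  exact (integral_prod _ (hf.comp_measurable (by fun_prop))).symm

theorem integral_mehler (hf : Integrable f (γ E)) (hτ : τ ∈ Icc (0 : ℝ) 1) :
    ∫ x, mehler τ f x ∂γ E = ∫ x, f x ∂γ E :=
  integral_integral_smul_add_smul
    (by rw [Real.sq_sqrt (sub_nonneg.2 hτ.2), Real.sq_sqrt hτ.1, sub_add_cancel]) hf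

theorem mehler_mehler (hf : Continuous f) (hmem : ∀ x, f x ∈ Icc p₀ p₁) (h0 : 0 ≤ τ)
    (hτz : τ < z) (hz : z ≤ 1) :
    mehler ((z - τ) / (1 - τ)) (mehler τ f) = mehler z f := by
  have h1τ : 0 < 1 - τ := by linarith
  have hz0 : 0 < z := h0.trans_lt hτz
  have hε : 1 - (z - τ) / (1 - τ) = (1 - z) / (1 - τ) := by field_simp; ring
  have hx : √(1 - τ) * √((1 - z) / (1 - τ)) = √(1 - z) := by
    rw [← Real.sqrt_mul h1τ.le, mul_div_cancel₀ _ h1τ.ne']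
  have hg : √(1 - τ) * √((z - τ) / (1 - τ)) = √z * √((z - τ) / z) := by
    rw [← Real.sqrt_mul h1τ.le, ← Real.sqrt_mul hz0.le, mul_div_cancel₀ _ h1τ.ne',
      mul_div_cancel₀ _ hz0.ne']
  have hg' : √τ = √z * √(τ / z) := by
    rw [← Real.sqrt_mul hz0.le, mul_div_cancel₀ _ hz0.ne']
  ext x
  calc mehler ((z - τ) / (1 - τ)) (mehler τ f) x
      = ∫ g, ∫ g', f (√(1 - z) • x + √z • (√((z - τ) / z) • g + √(τ / z) • g')) ∂γ E ∂γ E := by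
        simp only [mehler, hε, smul_add, smul_smul, hx, hg, ← hg', add_assoc]
    _ = mehler z f x := integral_integral_smul_add_smul
        (f := fun y => f (√(1 - z) • x + √z • y))
        (by rw [Real.sq_sqrt (div_nonneg (by linarith) hz0.le),
          Real.sq_sqrt (div_nonneg h0 hz0.le)]; field_simp; ring)
        (.of_mem_Icc p₀ p₁ (by fun_prop) (Eventually.of_forall fun _ => hmem _))

theorem PhiInv_mehler_le_add (hw : Continuous w) {x y θ : E} {η : ℝ}
    (hstep : ∀ g, w (√(1 - τ) • y + √τ • g) ≤ w (√(1 - τ) • x + √τ • (g + θ)) + η) :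
    PhiInv (mehler τ (fun z => Phi (w z)) y) ≤
      PhiInv (mehler τ (fun z => Phi (w z)) x) + √(‖θ‖ ^ 2 + η ^ 2) := by
  have hP (x : E) : mehler τ (fun z => Phi (w z)) x ∈ Ioo 0 1 :=
    integral_mem_Ioo (by fun_prop) fun _ => Phi_mem_Ioo _
  have hint {v : E → ℝ} (hv : Continuous v) : Integrable (fun g => Phi (v g)) (γ E) :=
    .of_mem_Icc 0 1 (by fun_prop)
      (Eventually.of_forall fun _ => Ioo_subset_Icc_self (Phi_mem_Ioo _))
  rw [← strictMono_Phi.le_iff_le, Phi_PhiInv (hP y)]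
  calc mehler τ (fun z => Phi (w z)) y
      ≤ ∫ g, Phi (w (√(1 - τ) • x + √τ • (g + θ)) + η) ∂γ E :=
        integral_mono (hint (by fun_prop)) (hint (by fun_prop)) fun g =>
          strictMono_Phi.monotone (hstep g)
    _ ≤ Phi (PhiInv (mehler τ (fun z => Phi (w z)) x) + √(‖θ‖ ^ 2 + η ^ 2)) :=
        integral_Phi_comp_add_le (w := fun g => w (√(1 - τ) • x + √τ • g)) (by fun_prop)
          (Phi_PhiInv (hP x)).ge θ η

theorem lipschitzWith_PhiInv_mehler {l : NNReal} (hw : LipschitzWith l w)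
    (hτ : τ ∈ Icc (0 : ℝ) 1) :
    LipschitzWith (l * √(1 - τ) / √(1 + l ^ 2 * τ)).toNNReal
      fun x => PhiInv (mehler τ (fun y => Phi (w y)) x) := by
  have hσ : √τ ^ 2 = τ := Real.sq_sqrt hτ.1
  have hD : 0 < 1 + l ^ 2 * τ := by have := hτ.1; positivity
  set c := √(1 - τ)
  set σ := √τ
  refine .of_le_add_mul _ fun y x => ?_
  rw [Real.coe_toNNReal _ (by positivity), dist_eq_norm]
  -- Moving `g` by `θ` makes up for part of the displacement `y - x`; this `θ` minimizes the
  -- total cost `‖θ‖ ^ 2 + η ^ 2`.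
  set θ : E := (l ^ 2 * c * σ / (1 + l ^ 2 * τ)) • (y - x)
  set η : ℝ := l * (c / (1 + l ^ 2 * τ) * ‖y - x‖)
  have hcost : √(‖θ‖ ^ 2 + η ^ 2) = l * c / √(1 + l ^ 2 * τ) * ‖y - x‖ := by
    rw [Real.sqrt_eq_iff_eq_sq (by positivity) (by positivity), norm_smul, mul_pow, mul_pow,
      mul_pow, mul_pow, Real.norm_eq_abs, sq_abs, div_pow, div_pow, div_pow, Real.sq_sqrt hD.le,
      mul_pow, mul_pow, hσ]
    field_simp
    ring
  rw [← hcost]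
  refine PhiInv_mehler_le_add hw.continuous fun g => ?_
  have hdisp : c • y + σ • g - (c • x + σ • (g + θ)) = (c / (1 + l ^ 2 * τ)) • (y - x) := by
    have : c / (1 + l ^ 2 * τ) = c - σ * (l ^ 2 * c * σ / (1 + l ^ 2 * τ)) := by
      field_simp; rw [hσ]; ring
    rw [this]; module
  have hle := hw.le_add_mul (c • y + σ • g) (c • x + σ • (g + θ))
  rwa [dist_eq_norm, hdisp, norm_smul, Real.norm_of_nonneg (by positivity)] at hle

end

/-! ### Second-order expansion along the semigroup -/

theorem integrable_comp_of_continuousOn_Icc {X : Type*} [TopologicalSpace X] [MeasurableSpace X]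
    [OpensMeasurableSpace X] {μ : Measure X} [IsFiniteMeasure μ] {f : X → ℝ} {G : ℝ → ℝ}
    {p₀ p₁ : ℝ} (hG : ContinuousOn G (Icc p₀ p₁)) (hf : Continuous f)
    (hmem : ∀ x, f x ∈ Icc p₀ p₁) : Integrable (fun x => G (f x)) μ := by
  obtain ⟨C, hC⟩ := isCompact_Icc.exists_bound_of_continuousOn hG
  exact .of_bound (hG.comp_continuous hf hmem).aestronglyMeasurable C
    (Eventually.of_forall fun x => hC _ (hmem x))

section

variable {G G' G'' : ℝ → ℝ} {p r p₀ p₁ : ℝ}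

/-- The height at `r` of the graph of `G` above its tangent at `p`, where `G'` stands for the
derivative of `G`. -/
def tangentGap (G G' : ℝ → ℝ) (p r : ℝ) : ℝ := G r - G p - G' p * (r - p)

theorem integral_tangentGap {X : Type*} [MeasurableSpace X] {μ : Measure X}
    [IsProbabilityMeasure μ] {h : X → ℝ} (hh : Integrable h μ)
    (hGh : Integrable (fun x => G (h x)) μ) :
    ∫ x, tangentGap G G' p (h x) ∂μ =
      tangentGap G G' p (∫ x, h x ∂μ) + (∫ x, G (h x) ∂μ - G (∫ x, h x ∂μ)) := by
  have hlin : Integrable (fun x => h x - p) μ := hh.sub (integrable_const p)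
  have hGlin : Integrable (fun x => G (h x) - G p) μ := hGh.sub (integrable_const _)
  simp only [tangentGap]
  rw [integral_sub hGlin (hlin.const_mul _),
    integral_sub hGh (integrable_const _), integral_const_mul, integral_sub hh (integrable_const _)]
  simp only [integral_const, probReal_univ, one_smul]
  ring

theorem exists_tangentGap_eq (hG : ∀ x ∈ uIcc p r, HasDerivAt G (G' x) x)
    (hG' : ∀ x ∈ uIcc p r, HasDerivAt G' (G'' x) x) :
    ∃ ζ ∈ uIcc p r, tangentGap G G' p r = G'' ζ / 2 * (r - p) ^ 2 := by
  have hline {s : ℝ} (hs : s ∈ Icc (0 : ℝ) 1) : p + s * (r - p) ∈ uIcc p r := by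
    rw [← segment_eq_uIcc]
    exact ⟨1 - s, s, sub_nonneg.2 hs.2, hs.1, by ring, by simp only [smul_eq_mul]; ring⟩
  have hderiv {H H' : ℝ → ℝ} (hH : ∀ x ∈ uIcc p r, HasDerivAt H (H' x) x) {s : ℝ}
      (hs : s ∈ Icc (0 : ℝ) 1) :
      HasDerivAt (fun s => H (p + s * (r - p))) (H' (p + s * (r - p)) * (r - p)) s :=
    (hH _ (hline hs)).comp s (((hasDerivAt_id s).mul_const (r - p)).const_add p |>.congr_deriv
      (one_mul _))
  have hgap {s : ℝ} (hs : s ∈ Icc (0 : ℝ) 1) :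
      HasDerivAt (fun s => G (p + s * (r - p)) - G' p * (r - p) * s)
        (G' (p + s * (r - p)) * (r - p) - G' p * (r - p)) s :=
    ((hderiv hG hs).sub ((hasDerivAt_id s).const_mul _)).congr_deriv (by simp)
  obtain ⟨c, hc, hfirst⟩ := exists_ratio_hasDerivAt_eq_ratio_slope _ _ zero_lt_one
    (fun s hs => (hgap hs).continuousAt.continuousWithinAt)
    (fun s hs => hgap (Ioo_subset_Icc_self hs)) (fun s : ℝ => s ^ 2) (fun s => 2 * s)
    (by fun_prop) fun s _ => by simpa using hasDerivAt_pow 2 s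
  have hsub {s : ℝ} (hs : s ∈ Icc 0 c) : s ∈ Icc (0 : ℝ) 1 := ⟨hs.1, hs.2.trans hc.2.le⟩
  obtain ⟨s, hs, hsecond⟩ := exists_hasDerivAt_eq_slope _ _ hc.1
    (fun s hs => (hderiv hG' (hsub hs)).continuousAt.continuousWithinAt)
    fun s hs => hderiv hG' (hsub (Ioo_subset_Icc_self hs))
  refine ⟨_, hline (hsub (Ioo_subset_Icc_self hs)), ?_⟩
  rw [eq_div_iff (by linarith [hc.1])] at hsecond
  simp only [zero_mul, add_zero, one_mul, mul_zero, mul_one, sub_zero, add_sub_cancel, one_pow,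
    ne_eq, OfNat.ofNat_ne_zero, not_false_eq_true, zero_pow] at hfirst hsecond
  have hc0 := hc.1.ne'
  rw [tangentGap]
  refine mul_left_cancel₀ (mul_ne_zero two_ne_zero hc0) ?_
  linear_combination -hfirst - (r - p) * hsecond

theorem exists_tangentGap_eq_of_mem_Icc (hG : ∀ x ∈ Icc p₀ p₁, HasDerivAt G (G' x) x)
    (hG' : ∀ x ∈ Icc p₀ p₁, HasDerivAt G' (G'' x) x) (hp : p ∈ Icc p₀ p₁)
    (hr : r ∈ Icc p₀ p₁) :
    ∃ ζ ∈ Icc p₀ p₁, |ζ - p| ≤ |r - p| ∧ tangentGap G G' p r = G'' ζ / 2 * (r - p) ^ 2 := by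
  have hsub : uIcc p r ⊆ Icc p₀ p₁ := uIcc_subset_Icc hp hr
  obtain ⟨ζ, hζ, heq⟩ := exists_tangentGap_eq (fun x hx => hG x (hsub hx))
    fun x hx => hG' x (hsub hx)
  exact ⟨ζ, hsub hζ, abs_sub_left_of_mem_uIcc hζ, heq⟩

end

theorem absolutelyContinuous_pi : ∀ {n : ℕ} {α : Fin n → Type*} {_ : ∀ i, MeasurableSpace (α i)}
    {μ ν : ∀ i, Measure (α i)} [∀ i, SigmaFinite (μ i)] [∀ i, SigmaFinite (ν i)],
    (∀ i, μ i ≪ ν i) → Measure.pi μ ≪ Measure.pi ν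
  | 0, _, _, _, _, _, _, _ => by rw [Measure.pi_of_empty, Measure.pi_of_empty]
  | n + 1, _, _, μ, ν, _, _, h => by
    rw [← ((measurePreserving_piFinSuccAbove μ 0).symm).map_eq,
      ← ((measurePreserving_piFinSuccAbove ν 0).symm).map_eq]
    exact ((h 0).prod (absolutelyContinuous_pi fun i => h _)).map (MeasurableEquiv.measurable _)

section

variable {E : Type*} [NormedAddCommGroup E] [InnerProductSpace ℝ E]
  {f : E → ℝ} {G G' G'' : ℝ → ℝ} {p₀ p₁ : ℝ} {L : NNReal}

theorem tendsto_comp_smul_add_smul_sub_div_sqrt {x : E}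
    (hf : DifferentiableAt ℝ f x) (g : E) :
    Tendsto (fun ε => (f (√(1 - ε) • x + √ε • g) - f x) / √ε) (𝓝[>] 0) (𝓝 (fderiv ℝ f x g)) := by
  have hpath : HasDerivAt (fun s : ℝ => √(1 - s ^ 2) • x + s • g) g 0 := by
    have hroot : HasDerivAt (fun s : ℝ => √(1 - s ^ 2)) 0 0 :=
      (((hasDerivAt_pow 2 (0 : ℝ)).const_sub 1).sqrt (by simp)).congr_deriv (by simp)
    exact ((hroot.smul_const x).add ((hasDerivAt_id 0).smul_const g)).congr_deriv (by simp)
  have hstart : √(1 - (0 : ℝ) ^ 2) • x + (0 : ℝ) • g = x := by simp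
  have hslope := (HasFDerivAt.comp_hasDerivAt (l := f) 0 (by rw [hstart]; exact hf.hasFDerivAt)
    hpath).tendsto_slope_zero_right
  have hsqrt : Tendsto Real.sqrt (𝓝[>] 0) (𝓝[>] 0) :=
    tendsto_nhdsWithin_iff.2 ⟨(Real.continuous_sqrt.tendsto' 0 0 Real.sqrt_zero).mono_left
      nhdsWithin_le_nhds, eventually_mem_nhdsWithin.mono fun _ h => Real.sqrt_pos.2 h⟩
  refine (hslope.comp hsqrt).congr' (eventually_mem_nhdsWithin.mono fun ε hε => ?_)
  simp only [Function.comp_apply, zero_add, Real.sq_sqrt (mem_Ioi.1 hε).le, hstart, smul_eq_mul,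
    inv_mul_eq_div]

theorem norm_smul_add_smul_sub_le {ε : ℝ} (hε : ε ∈ Icc (0 : ℝ) 1) (x g : E) :
    ‖√(1 - ε) • x + √ε • g - x‖ ≤ √ε * (‖x‖ + ‖g‖) := by
  have hroot : 1 - √(1 - ε) ≤ √ε := by
    have hsq := Real.sq_sqrt hε.1
    have hle : 1 - √ε ≤ √(1 - ε) := Real.le_sqrt_of_sq_le (by
      nlinarith [Real.sqrt_nonneg ε, Real.sqrt_le_one.2 hε.2])
    linarith
  have hroot0 : 0 ≤ 1 - √(1 - ε) := sub_nonneg.2 (Real.sqrt_le_one.2 (by linarith [hε.1]))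
  calc ‖√(1 - ε) • x + √ε • g - x‖ = ‖√ε • g - (1 - √(1 - ε)) • x‖ := by
        congr 1; module
    _ ≤ √ε * ‖g‖ + (1 - √(1 - ε)) * ‖x‖ := by
        refine (norm_sub_le _ _).trans_eq ?_
        rw [norm_smul, norm_smul, Real.norm_of_nonneg (Real.sqrt_nonneg ε),
          Real.norm_of_nonneg hroot0]
    _ ≤ √ε * (‖x‖ + ‖g‖) := by nlinarith [norm_nonneg x]

theorem tendsto_tangentGap_comp_div (hG : ∀ x ∈ Icc p₀ p₁, HasDerivAt G (G' x) x)
    (hG' : ∀ x ∈ Icc p₀ p₁, HasDerivAt G' (G'' x) x) (hG'' : ContinuousOn G'' (Icc p₀ p₁))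
    (hf : Continuous f) (hmem : ∀ x, f x ∈ Icc p₀ p₁) {x : E} (hfx : DifferentiableAt ℝ f x)
    (g : E) :
    Tendsto (fun ε => tangentGap G G' (f x) (f (√(1 - ε) • x + √ε • g)) / ε) (𝓝[>] 0)
      (𝓝 (G'' (f x) / 2 * fderiv ℝ f x g ^ 2)) := by
  choose ζ hζmem hζle hζ using fun ε : ℝ =>
    exists_tangentGap_eq_of_mem_Icc hG hG' (hmem x) (hmem (√(1 - ε) • x + √ε • g))
  have hincr : Tendsto (fun ε => f (√(1 - ε) • x + √ε • g) - f x) (𝓝[>] 0) (𝓝 0) :=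
    ((by fun_prop : Continuous fun ε : ℝ => f (√(1 - ε) • x + √ε • g) - f x).tendsto' 0 0
      (by simp)).mono_left nhdsWithin_le_nhds
  have hζlim : Tendsto ζ (𝓝[>] 0) (𝓝[Icc p₀ p₁] (f x)) := by
    refine tendsto_nhdsWithin_iff.2 ⟨?_, Eventually.of_forall hζmem⟩
    rw [tendsto_iff_dist_tendsto_zero]
    exact squeeze_zero (fun _ => dist_nonneg) hζle (by simpa using hincr.abs)
  refine ((((hG'' _ (hmem x)).tendsto.comp hζlim).div_const 2).mul
    ((tendsto_comp_smul_add_smul_sub_div_sqrt hfx g).pow 2)).congr'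
    (eventually_mem_nhdsWithin.mono fun ε hε => ?_)
  simp only [hζ, div_pow, Real.sq_sqrt (mem_Ioi.1 hε).le, Function.comp_apply]
  ring

theorem abs_tangentGap_comp_le {M : ℝ} (hG : ∀ x ∈ Icc p₀ p₁, HasDerivAt G (G' x) x)
    (hG' : ∀ x ∈ Icc p₀ p₁, HasDerivAt G' (G'' x) x) (hM : ∀ x ∈ Icc p₀ p₁, |G'' x| ≤ M)
    (hf : LipschitzWith L f) (hmem : ∀ x, f x ∈ Icc p₀ p₁) {ε : ℝ} (hε : ε ∈ Icc (0 : ℝ) 1)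
    (x g : E) :
    |tangentGap G G' (f x) (f (√(1 - ε) • x + √ε • g))| ≤
      ε * (M / 2 * L ^ 2 * (‖x‖ + ‖g‖) ^ 2) := by
  obtain ⟨ζ, hζ, -, heq⟩ :=
    exists_tangentGap_eq_of_mem_Icc hG hG' (hmem x) (hmem (√(1 - ε) • x + √ε • g))
  have hincr : |f (√(1 - ε) • x + √ε • g) - f x| ≤ L * (√ε * (‖x‖ + ‖g‖)) := by
    refine (hf.norm_sub_le _ _).trans ?_
    gcongr
    exact norm_smul_add_smul_sub_le hε x g
  have hM0 : 0 ≤ M := (abs_nonneg _).trans (hM ζ hζ)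
  calc |tangentGap G G' (f x) (f (√(1 - ε) • x + √ε • g))|
      = |G'' ζ| / 2 * |f (√(1 - ε) • x + √ε • g) - f x| ^ 2 := by
        rw [heq, abs_mul, abs_div, abs_pow, abs_two]
    _ ≤ M / 2 * (L * (√ε * (‖x‖ + ‖g‖))) ^ 2 := by gcongr; exact hM ζ hζ
    _ = ε * (M / 2 * L ^ 2 * (‖x‖ + ‖g‖) ^ 2) := by
        rw [mul_pow, mul_pow, Real.sq_sqrt hε.1]; ring

end

section

variable {E : Type*} [NormedAddCommGroup E] [InnerProductSpace ℝ E] [FiniteDimensional ℝ E]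
  [MeasurableSpace E] [BorelSpace E]

theorem stdGaussian_absolutelyContinuous : γ E ≪ volume := by
  set b := stdOrthonormalBasis ℝ E
  have hcoord : (fun x : Fin (Module.finrank ℝ E) → ℝ => ∑ i, x i • b i) =
      fun x => b.repr.symm (WithLp.toLp 2 x) := by
    ext x; rw [OrthonormalBasis.sum_repr_symm]
  have hvol : MeasurePreserving fun x : Fin (Module.finrank ℝ E) → ℝ => ∑ i, x i • b i := by
    rw [hcoord]
    exact b.measurePreserving_repr_symm.comp (PiLp.volume_preserving_toLp _)
  rw [ProbabilityTheory.stdGaussian, ← hvol.map_eq]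
  exact (absolutelyContinuous_pi fun _ => gaussianReal_absolutelyContinuous 0 one_ne_zero).map
    hvol.measurable

theorem integral_sq_strongDual_stdGaussian (L : StrongDual ℝ E) :
    ∫ x, L x ^ 2 ∂γ E = ‖L‖ ^ 2 := by
  rw [← variance_dual_stdGaussian, variance_of_integral_eq_zero
    L.continuous.aemeasurable (integral_strongDual_stdGaussian L)]

theorem integrable_norm_add_norm_sq :
    Integrable (fun q : E × E => (‖q.1‖ + ‖q.2‖) ^ 2) ((γ E).prod (γ E)) := by
  have hL2 : MemLp (fun x : E => ‖x‖) 2 (γ E) := (IsGaussian.memLp_id (γ E) 2 (by simp)).norm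
  exact ((hL2.comp_fst (γ E)).add (hL2.comp_snd (γ E))).integrable_sq

variable {f : E → ℝ} {G G' G'' : ℝ → ℝ} {p₀ p₁ : ℝ} {L : NNReal}

theorem integrable_tangentGap_comp (hG : ContinuousOn G (Icc p₀ p₁))
    (hG' : ContinuousOn G' (Icc p₀ p₁)) (hf : Continuous f) (hmem : ∀ x, f x ∈ Icc p₀ p₁)
    (ε : ℝ) :
    Integrable (fun q : E × E => tangentGap G G' (f q.1) (f (√(1 - ε) • q.1 + √ε • q.2)))
      ((γ E).prod (γ E)) := by
  obtain ⟨C, hC⟩ := isCompact_Icc.exists_bound_of_continuousOn hG'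
  have hstep : Continuous fun q : E × E => √(1 - ε) • q.1 + √ε • q.2 := by fun_prop
  have hint {u : E × E → E} (hu : Continuous u) :
      Integrable (fun q => f (u q)) ((γ E).prod (γ E)) :=
    .of_mem_Icc p₀ p₁ (by fun_prop) (Eventually.of_forall fun _ => hmem _)
  have hintG {u : E × E → E} (hu : Continuous u) :
      Integrable (fun q => G (f (u q))) ((γ E).prod (γ E)) :=
    integrable_comp_of_continuousOn_Icc hG (hf.comp hu) fun _ => hmem _
  exact ((hintG hstep).sub (hintG continuous_fst)).sub
    (((hint hstep).sub (hint continuous_fst)).bdd_mul (c := C)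
      ((hG'.comp_continuous hf hmem).comp continuous_fst).aestronglyMeasurable
      (Eventually.of_forall fun _ => hC _ (hmem _)))

/-- What `∫ G (f x)` loses, to first order, under the Ornstein–Uhlenbeck step of length `ε`
when `G` is convex with derivative `G'`. -/
noncomputable def stepLoss (G G' : ℝ → ℝ) (f : E → ℝ) (ε : ℝ) : ℝ :=
  ∫ q : E × E, tangentGap G G' (f q.1) (f (√(1 - ε) • q.1 + √ε • q.2)) ∂(γ E).prod (γ E)

theorem tendsto_stepLoss_div (hG : ∀ x ∈ Icc p₀ p₁, HasDerivAt G (G' x) x)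
    (hG' : ∀ x ∈ Icc p₀ p₁, HasDerivAt G' (G'' x) x) (hG'' : ContinuousOn G'' (Icc p₀ p₁))
    (hf : LipschitzWith L f) (hmem : ∀ x, f x ∈ Icc p₀ p₁) :
    Tendsto (fun ε => stepLoss G G' f ε / ε) (𝓝[>] 0)
      (𝓝 (∫ q : E × E, G'' (f q.1) / 2 * fderiv ℝ f q.1 q.2 ^ 2 ∂(γ E).prod (γ E))) := by
  obtain ⟨M, hM⟩ := isCompact_Icc.exists_bound_of_continuousOn hG''
  simp only [stepLoss, ← integral_div]
  refine tendsto_integral_filter_of_dominated_convergence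
    (fun q => M / 2 * L ^ 2 * (‖q.1‖ + ‖q.2‖) ^ 2) ?_ ?_
    (integrable_norm_add_norm_sq.const_mul _) ?_
  · exact Eventually.of_forall fun ε =>
      ((integrable_tangentGap_comp (HasDerivAt.continuousOn hG) (HasDerivAt.continuousOn hG')
        hf.continuous hmem ε).div_const ε).aestronglyMeasurable
  · filter_upwards [Ioc_mem_nhdsGT zero_lt_one] with ε hε
    refine Eventually.of_forall fun q => ?_
    rw [Real.norm_eq_abs, abs_div, abs_of_pos hε.1, div_le_iff₀' hε.1]
    exact abs_tangentGap_comp_le hG hG' hM hf hmem ⟨hε.1.le, hε.2⟩ _ _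
  · have hdiff : ∀ᵐ q ∂(γ E).prod (γ E), DifferentiableAt ℝ f q.1 :=
      Measure.quasiMeasurePreserving_fst.ae
        (stdGaussian_absolutelyContinuous.ae_le hf.ae_differentiableAt)
    filter_upwards [hdiff] with q hq
    exact tendsto_tangentGap_comp_div hG hG' hG'' hf.continuous hmem hq q.2

theorem integral_mul_fderiv_sq {h : E → ℝ} {M : ℝ} (hh : Continuous h) (hM : ∀ x, |h x| ≤ M)
    (hf : LipschitzWith L f) :
    ∫ q : E × E, h q.1 * fderiv ℝ f q.1 q.2 ^ 2 ∂(γ E).prod (γ E) =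
      ∫ x, h x * ‖fderiv ℝ f x‖ ^ 2 ∂γ E := by
  have hmeas : Measurable fun q : E × E => fderiv ℝ f q.1 q.2 :=
    isBoundedBilinearMap_apply.continuous.measurable.comp
      (((measurable_fderiv ℝ f).comp measurable_fst).prodMk measurable_snd)
  have hint : Integrable (fun q : E × E => h q.1 * fderiv ℝ f q.1 q.2 ^ 2)
      ((γ E).prod (γ E)) := by
    refine (integrable_norm_add_norm_sq.const_mul (M * L ^ 2)).mono' (by fun_prop)
      (Eventually.of_forall fun q => ?_)
    have hle : ‖fderiv ℝ f q.1 q.2‖ ≤ L * (‖q.1‖ + ‖q.2‖) :=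
      ((fderiv ℝ f q.1).le_of_opNorm_le (norm_fderiv_le_of_lipschitz ℝ hf) q.2).trans
        (by gcongr; exact le_add_of_nonneg_left (norm_nonneg _))
    have hM0 : 0 ≤ M := (abs_nonneg _).trans (hM q.1)
    rw [norm_mul, norm_pow, mul_assoc, ← mul_pow]
    gcongr
    exact hM q.1
  rw [integral_prod _ hint]
  simp only [integral_const_mul, integral_sq_strongDual_stdGaussian]

theorem integral_comp_le_integral_comp_mehler_add (hG : ∀ x ∈ Icc p₀ p₁, HasDerivAt G (G' x) x)
    (hG' : ∀ x ∈ Icc p₀ p₁, HasDerivAt G' (G'' x) x) (hG''0 : ∀ x ∈ Icc p₀ p₁, 0 ≤ G'' x)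
    (hf : Continuous f) (hmem : ∀ x, f x ∈ Icc p₀ p₁) {ε : ℝ} (hε : ε ∈ Icc (0 : ℝ) 1) :
    ∫ x, G (f x) ∂γ E ≤ ∫ x, G (mehler ε f x) ∂γ E + stepLoss G G' f ε := by
  have hGc : ContinuousOn G (Icc p₀ p₁) := HasDerivAt.continuousOn hG
  have hstep : Continuous fun q : E × E => √(1 - ε) • q.1 + √ε • q.2 := by fun_prop
  have hstepR (x : E) : Continuous fun g : E => √(1 - ε) • x + √ε • g := by fun_prop
  have hgap := integrable_tangentGap_comp hGc (HasDerivAt.continuousOn hG') hf hmem ε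
  have hPG : Integrable (fun x => mehler ε (fun y => G (f y)) x) (γ E) :=
    (integrable_comp_of_continuousOn_Icc hGc (hf.comp hstep) fun _ => hmem _).integral_prod_left
  have hGP : Integrable (fun x => G (mehler ε f x)) (γ E) :=
    integrable_comp_of_continuousOn_Icc hGc
      ((continuous_mehler hf hmem).comp (Continuous.prodMk_right ε))
      fun x => mehler_mem_Icc hf.measurable hmem ε x
  have hpoint (x : E) : mehler ε (fun y => G (f y)) x ≤ G (mehler ε f x) +
      ∫ g, tangentGap G G' (f x) (f (√(1 - ε) • x + √ε • g)) ∂γ E := by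
    have hintG : Integrable (fun g => G (f (√(1 - ε) • x + √ε • g))) (γ E) :=
      integrable_comp_of_continuousOn_Icc hGc (hf.comp (hstepR x)) fun _ => hmem _
    have hintf : Integrable (fun g => f (√(1 - ε) • x + √ε • g)) (γ E) :=
      .of_mem_Icc p₀ p₁ (by fun_prop) (Eventually.of_forall fun _ => hmem _)
    obtain ⟨ζ, hζ, -, hconvex⟩ := exists_tangentGap_eq_of_mem_Icc hG hG' (hmem x)
      (mehler_mem_Icc hf.measurable hmem ε x)
    have hgap0 : 0 ≤ tangentGap G G' (f x) (mehler ε f x) := by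
      rw [hconvex]; have := hG''0 ζ hζ; positivity
    rw [integral_tangentGap hintf hintG]
    simp only [mehler] at hgap0 ⊢
    linarith
  calc ∫ x, G (f x) ∂γ E = ∫ x, mehler ε (fun y => G (f y)) x ∂γ E :=
        (integral_mehler (integrable_comp_of_continuousOn_Icc hGc hf hmem) hε).symm
    _ ≤ ∫ x, G (mehler ε f x) +
          ∫ g, tangentGap G G' (f x) (f (√(1 - ε) • x + √ε • g)) ∂γ E ∂γ E :=
        integral_mono hPG (hGP.add hgap.integral_prod_left) hpoint
    _ = ∫ x, G (mehler ε f x) ∂γ E + stepLoss G G' f ε := by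
        rw [integral_add hGP hgap.integral_prod_left, stepLoss, integral_prod _ hgap]

end

/-! ### The monotone quantity and its limit -/

theorem mul_le_mul_of_eventually_slope_lt {q q' N : ℝ → ℝ} {a b : ℝ} (hab : a ≤ b)
    (hq : ∀ x ∈ Icc a b, 0 < q x) (hq' : ∀ x ∈ Icc a b, HasDerivAt q (q' x) x)
    (hN : ContinuousOn N (Icc a b))
    (hslope : ∀ x ∈ Ico a b, ∀ r > q' x / q x * N x, ∀ᶠ z in 𝓝[>] x, (N x - N z) / (z - x) < r) :
    q a * N a ≤ q b * N b := by
  have hqc : ContinuousOn q (Icc a b) := HasDerivAt.continuousOn hq'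
  refine neg_le_neg_iff.1 (image_le_of_liminf_slope_right_le_deriv_boundary
    (f := fun x => -(q x * N x)) (B := fun _ => -(q a * N a)) (B' := 0) (hqc.mul hN).neg le_rfl
    continuousOn_const (fun x _ => hasDerivWithinAt_const x _ _) ?_ (right_mem_Icc.2 hab))
  intro x hx r hr
  have hqx := hq x (Ico_subset_Icc_self hx)
  have hr0 : 0 < r := hr
  set s := q' x / q x * N x + r / (2 * q x)
  have hs : q' x / q x * N x < s := lt_add_of_pos_right _ (by positivity)
  have hderiv := hq' x (Ico_subset_Icc_self hx)
  have hlim : Tendsto (fun z => q z * s - slope q x z * N x) (𝓝[>] x)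
      (𝓝 (q x * s - q' x * N x)) :=
    ((hderiv.continuousAt.tendsto.mono_left nhdsWithin_le_nhds).mul_const s).sub
      ((hderiv.tendsto_slope.mono_left (nhdsGT_le_nhdsNE x)).mul_const (N x))
  have hlimit : q x * s - q' x * N x < r := by
    have : q x * s = q' x * N x + r / 2 := by simp only [s]; field_simp
    linarith
  refine Eventually.frequently ?_
  filter_upwards [hlim.eventually_lt_const hlimit, hslope x hx s hs, Ioo_mem_nhdsGT hx.2]
    with z hz hNz hxz
  have hxz' : 0 < z - x := sub_pos.2 hxz.1
  calc slope (fun x => -(q x * N x)) x z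
      = q z * ((N x - N z) / (z - x)) - slope q x z * N x := by
        simp only [slope_def_field]; field_simp; ring
    _ ≤ q z * s - slope q x z * N x := by gcongr; exact (hq z ⟨hx.1.trans hxz.1.le, hxz.2.le⟩).le
    _ < r := hz

theorem lipschitzWith_of_PhiInv_comp {X : Type*} [PseudoEMetricSpace X] {f : X → ℝ} {K : NNReal}
    (hf01 : ∀ x, f x ∈ Ioo (0 : ℝ) 1)
    (hf : LipschitzWith K fun x => PhiInv (f x)) : LipschitzWith K f := by
  simpa [Function.comp_def, Phi_PhiInv (hf01 _)] using lipschitzWith_Phi.comp hf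

theorem norm_fderiv_le_of_PhiInv_comp {V : Type*} [NormedAddCommGroup V] [NormedSpace ℝ V]
    {f : V → ℝ} {K : NNReal} (hf01 : ∀ x, f x ∈ Ioo (0 : ℝ) 1)
    (hf : LipschitzWith K fun x => PhiInv (f x)) (x : V) :
    ‖fderiv ℝ f x‖ ≤ K * φ (PhiInv (f x)) := by
  have hφ := gaussianPDFReal_zero_one_pos (PhiInv (f x))
  by_cases hfx : DifferentiableAt ℝ f x
  · have hcomp := ((hasDerivAt_PhiInv (hf01 x)).comp_hasFDerivAt x hfx.hasFDerivAt).fderiv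
    have hle := norm_fderiv_le_of_lipschitz ℝ (x₀ := x) hf
    rw [← Function.comp_def PhiInv, hcomp, norm_smul, norm_inv, Real.norm_of_nonneg hφ.le,
      inv_mul_le_iff₀ hφ] at hle
    rwa [mul_comm]
  · rw [fderiv_zero_of_not_differentiableAt hfx, norm_zero]
    positivity

section

variable {E : Type*} [NormedAddCommGroup E] [InnerProductSpace ℝ E] [FiniteDimensional ℝ E]
  [MeasurableSpace E] [BorelSpace E] {f w : E → ℝ} {K : NNReal} {p₀ p₁ : ℝ}

theorem exists_tendsto_stepLoss_excessProfile_div (hsub : Icc p₀ p₁ ⊆ Ioo 0 1)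
    (hmem : ∀ x, f x ∈ Icc p₀ p₁) (hf : LipschitzWith K fun x => PhiInv (f x)) :
    ∃ D ≤ K ^ 2 / 2 * ∫ x, excessProfile (f x) ∂γ E,
      Tendsto (fun ε => stepLoss excessProfile (fun p => (p - 1) / φ (PhiInv p)) f ε / ε)
        (𝓝[>] 0) (𝓝 D) := by
  have hfL := lipschitzWith_of_PhiInv_comp (fun x => hsub (hmem x)) hf
  have hG : ContinuousOn excessProfile (Icc p₀ p₁) :=
    HasDerivAt.continuousOn fun p hp => hasDerivAt_excessProfile (hsub hp)
  have hG'' : ContinuousOn (fun p => excessProfile p / φ (PhiInv p) ^ 2) (Icc p₀ p₁) :=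
    hG.div ((continuous_gaussianPDFReal_zero_one.comp_continuousOn fun p hp =>
      (continuousAt_PhiInv (hsub hp)).continuousWithinAt).pow 2)
      fun p _ => (pow_pos (gaussianPDFReal_zero_one_pos _) 2).ne'
  obtain ⟨M, hM⟩ := isCompact_Icc.exists_bound_of_continuousOn (hG''.div_const 2)
  refine ⟨_, ?_, tendsto_stepLoss_div (fun p hp => hasDerivAt_excessProfile (hsub hp))
    (fun p hp => hasDerivAt_deriv_excessProfile (hsub hp)) hG'' hfL hmem⟩
  rw [integral_mul_fderiv_sq (h := fun x => excessProfile (f x) / φ (PhiInv (f x)) ^ 2 / 2)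
    ((hG''.div_const 2).comp_continuous hfL.continuous hmem) (fun x => hM _ (hmem x)) hfL,
    ← integral_const_mul]
  refine integral_mono_of_nonneg (Eventually.of_forall fun x => ?_)
    ((integrable_comp_of_continuousOn_Icc hG hfL.continuous hmem).const_mul _)
    (Eventually.of_forall fun x => ?_)
  · have := gaussianExcess_nonneg (PhiInv (f x))
    simp only [excessProfile, Pi.zero_apply]
    positivity
  · have hφ := gaussianPDFReal_zero_one_pos (PhiInv (f x))
    have hexc : 0 ≤ excessProfile (f x) := gaussianExcess_nonneg _
    calc excessProfile (f x) / φ (PhiInv (f x)) ^ 2 / 2 * ‖fderiv ℝ f x‖ ^ 2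
        ≤ excessProfile (f x) / φ (PhiInv (f x)) ^ 2 / 2 * (K * φ (PhiInv (f x))) ^ 2 := by
          gcongr
          exact norm_fderiv_le_of_PhiInv_comp (fun x => hsub (hmem x)) hf x
      _ = K ^ 2 / 2 * excessProfile (f x) := by field_simp

theorem continuous_integral_excessProfile_mehler (hsub : Icc p₀ p₁ ⊆ Ioo 0 1) (hf : Continuous f)
    (hmem : ∀ x, f x ∈ Icc p₀ p₁) :
    Continuous fun τ => ∫ x, excessProfile (mehler τ f x) ∂γ E := by
  have hG : ContinuousOn excessProfile (Icc p₀ p₁) :=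
    HasDerivAt.continuousOn fun p hp => hasDerivAt_excessProfile (hsub hp)
  have hP (τ : ℝ) (x : E) : mehler τ f x ∈ Icc p₀ p₁ := mehler_mem_Icc hf.measurable hmem τ x
  have hGP := hG.comp_continuous (continuous_mehler hf hmem) fun q => hP q.1 q.2
  obtain ⟨M, hM⟩ := isCompact_Icc.exists_bound_of_continuousOn hG
  exact continuous_of_dominated (bound := fun _ => M)
    (fun τ => (hGP.comp (Continuous.prodMk_right τ)).aestronglyMeasurable)
    (fun τ => Eventually.of_forall fun x => hM _ (hP τ x)) (integrable_const _)
    (Eventually.of_forall fun x => hGP.comp (Continuous.prodMk_left x))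

theorem integral_excessProfile_mehler_sub_le (hsub : Icc p₀ p₁ ⊆ Ioo 0 1) (hf : Continuous f)
    (hmem : ∀ x, f x ∈ Icc p₀ p₁) {τ z : ℝ} (h0 : 0 ≤ τ) (hτz : τ < z) (hz : z ≤ 1) :
    ∫ x, excessProfile (mehler τ f x) ∂γ E - ∫ x, excessProfile (mehler z f x) ∂γ E ≤
      stepLoss excessProfile (fun p => (p - 1) / φ (PhiInv p)) (mehler τ f)
        ((z - τ) / (1 - τ)) := by
  have h1τ : 0 < 1 - τ := by linarith
  have hε : (z - τ) / (1 - τ) ∈ Icc (0 : ℝ) 1 :=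
    ⟨div_nonneg (by linarith) h1τ.le, (div_le_one h1τ).2 (by linarith)⟩
  rw [sub_le_iff_le_add', ← mehler_mehler hf hmem h0 hτz hz]
  exact integral_comp_le_integral_comp_mehler_add
    (fun p hp => hasDerivAt_excessProfile (hsub hp))
    (fun p hp => hasDerivAt_deriv_excessProfile (hsub hp))
    (fun p _ => div_nonneg (gaussianExcess_nonneg _) (sq_nonneg _))
    ((continuous_mehler hf hmem).comp (Continuous.prodMk_right τ))
    (mehler_mem_Icc hf.measurable hmem τ) hε

theorem eventually_integral_excessProfile_mehler_slope_lt (hsub : Icc p₀ p₁ ⊆ Ioo 0 1)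
    (hf : Continuous f) (hmem : ∀ x, f x ∈ Icc p₀ p₁) {τ r : ℝ} (hτ : τ ∈ Ico (0 : ℝ) 1)
    (hK : LipschitzWith K fun x => PhiInv (mehler τ f x))
    (hr : K ^ 2 / (2 * (1 - τ)) * ∫ x, excessProfile (mehler τ f x) ∂γ E < r) :
    ∀ᶠ z in 𝓝[>] τ, (∫ x, excessProfile (mehler τ f x) ∂γ E -
      ∫ x, excessProfile (mehler z f x) ∂γ E) / (z - τ) < r := by
  have h1τ : 0 < 1 - τ := sub_pos.2 hτ.2
  obtain ⟨D, hD, hlim⟩ := exists_tendsto_stepLoss_excessProfile_div hsub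
    (mehler_mem_Icc hf.measurable hmem τ) hK
  have hDr : D < r * (1 - τ) := by
    refine hD.trans_lt ?_
    rwa [← div_div, div_mul_eq_mul_div, div_lt_iff₀ h1τ] at hr
  have hε : Tendsto (fun z => (z - τ) / (1 - τ)) (𝓝[>] τ) (𝓝[>] 0) :=
    tendsto_nhdsWithin_iff.2 ⟨((by fun_prop : Continuous fun z => (z - τ) / (1 - τ)).tendsto' τ 0
      (by simp)).mono_left nhdsWithin_le_nhds,
      eventually_mem_nhdsWithin.mono fun z hz => div_pos (sub_pos.2 hz) h1τ⟩
  filter_upwards [(hlim.comp hε).eventually_lt_const hDr, Ioc_mem_nhdsGT hτ.2] with z hlt hz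
  have hz0 : 0 < z - τ := sub_pos.2 hz.1
  rw [Function.comp_apply, div_div_eq_mul_div, div_lt_iff₀ hz0, mul_right_comm] at hlt
  rw [div_lt_iff₀ hz0]
  exact (integral_excessProfile_mehler_sub_le hsub hf hmem hτ.1 hz.1 hz.2).trans_lt
    (lt_of_mul_lt_mul_right hlt h1τ.le)

/- The two sides are the values at `τ = 0` and `τ = 1` of the increasing function
`√(1 + l ^ 2 * τ) * ∫ excessProfile (mehler τ (Phi ∘ w))`. -/
theorem integral_gaussianExcess_le {l : NNReal} {C : ℝ} (hw : LipschitzWith l w)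
    (hC : ∀ x, |w x| ≤ C) :
    ∫ x, gaussianExcess (w x) ∂γ E ≤ √(1 + l ^ 2) * excessProfile (∫ x, Phi (w x) ∂γ E) := by
  set f : E → ℝ := fun x => Phi (w x)
  have hf : Continuous f := continuous_Phi.comp hw.continuous
  have hmem (x : E) : f x ∈ Icc (Phi (-C)) (Phi C) :=
    ⟨strictMono_Phi.monotone (abs_le.1 (hC x)).1, strictMono_Phi.monotone (abs_le.1 (hC x)).2⟩
  have hsub : Icc (Phi (-C)) (Phi C) ⊆ Ioo 0 1 :=
    Icc_subset_Ioo (Phi_mem_Ioo _).1 (Phi_mem_Ioo _).2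
  have hq (τ : ℝ) (hτ : τ ∈ Icc (0 : ℝ) 1) : 0 < 1 + l ^ 2 * τ := by have := hτ.1; positivity
  have hderiv (τ : ℝ) (hτ : τ ∈ Icc (0 : ℝ) 1) :
      HasDerivAt (fun τ => √(1 + l ^ 2 * τ)) (l ^ 2 / (2 * √(1 + l ^ 2 * τ))) τ :=
    ((((hasDerivAt_id τ).const_mul _).const_add 1).sqrt (hq τ hτ).ne').congr_deriv
      (by rw [mul_one, id])
  have hmono := mul_le_mul_of_eventually_slope_lt
    (N := fun τ => ∫ x, excessProfile (mehler τ f x) ∂γ E) zero_le_one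
    (fun τ hτ => Real.sqrt_pos.2 (hq τ hτ)) hderiv
    (continuous_integral_excessProfile_mehler hsub hf hmem).continuousOn fun τ hτ r hr => ?_
  · simpa [mehler_zero, mehler_one, f, excessProfile_Phi] using hmono
  refine eventually_integral_excessProfile_mehler_slope_lt hsub hf hmem hτ
    (lipschitzWith_PhiInv_mehler hw (Ico_subset_Icc_self hτ)) (hr.trans_eq' ?_)
  have hqτ := hq τ (Ico_subset_Icc_self hτ)
  have h1τ : 0 < 1 - τ := sub_pos.2 hτ.2
  rw [Real.coe_toNNReal _ (by positivity), div_pow, mul_pow, Real.sq_sqrt h1τ.le,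
    Real.sq_sqrt hqτ.le, div_div, mul_assoc 2, Real.mul_self_sqrt hqτ.le]
  field_simp

end

section

variable {E : Type*} [NormedAddCommGroup E] [InnerProductSpace ℝ E] [FiniteDimensional ℝ E]
  [MeasurableSpace E] [BorelSpace E] {F w : E → ℝ} {a C : ℝ}

theorem mul_le_integral_Phi_comp {s p : ℝ} (hw : Measurable w)
    (hp : p ≤ (γ E).real {x | s ≤ w x}) : Phi s * p ≤ ∫ x, Phi (w x) ∂γ E := by
  have hset : MeasurableSet {x | s ≤ w x} := measurableSet_le measurable_const hw
  calc Phi s * p ≤ Phi s * (γ E).real {x | s ≤ w x} :=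
        mul_le_mul_of_nonneg_left hp (Phi_mem_Ioo s).1.le
    _ = ∫ x, {x | s ≤ w x}.indicator (fun _ => Phi s) x ∂γ E := by
        rw [integral_indicator_const _ hset, smul_eq_mul, mul_comm]
    _ ≤ ∫ x, Phi (w x) ∂γ E := by
        refine integral_mono ((integrable_const _).indicator hset)
          (.of_mem_Icc 0 1 (by fun_prop)
            (Eventually.of_forall fun _ => Ioo_subset_Icc_self (Phi_mem_Ioo _)))
          (indicator_le' (fun x hx => strictMono_Phi.monotone hx) fun x _ => (Phi_mem_Ioo _).1.le)

theorem mul_integral_sub_le {l : NNReal} {t : ℝ} (hF : LipschitzWith 1 F) (hC : ∀ x, |F x| ≤ C)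
    (ha : Phi a ≤ (γ E).real {x | F x ≤ 0}) :
    l * (∫ x, F x ∂γ E - t) ≤ √(1 + l ^ 2) * excessProfile (Phi (l * t) * Phi a) := by
  have hFc := hF.continuous
  set w : E → ℝ := fun x => l * (t - F x)
  have hwc : Continuous w := by fun_prop
  have hw : LipschitzWith l w := .of_le_add_mul l fun x y => by
    have := hF.le_add_mul y x
    rw [NNReal.coe_one, one_mul, dist_comm] at this
    simp only [w]
    nlinarith [l.coe_nonneg]
  have hwC (x : E) : |w x| ≤ l * (|t| + C) := by
    rw [abs_mul, NNReal.abs_eq]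
    gcongr
    exact (abs_sub _ _).trans (add_le_add_right (hC x) _)
  have hFint : Integrable F (γ E) :=
    .of_bound hFc.aestronglyMeasurable C (Eventually.of_forall hC)
  have hmean : Phi (l * t) * Phi a ≤ ∫ x, Phi (w x) ∂γ E := by
    refine mul_le_integral_Phi_comp hwc.measurable (ha.trans (measureReal_mono fun x hx => ?_))
    exact mul_le_mul_of_nonneg_left (by linarith [show F x ≤ 0 from hx]) l.coe_nonneg
  have hprod : Phi (l * t) * Phi a ∈ Ioo (0 : ℝ) 1 :=
    ⟨mul_pos (Phi_mem_Ioo _).1 (Phi_mem_Ioo _).1,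
      mul_lt_one_of_nonneg_of_lt_one_left (Phi_mem_Ioo _).1.le (Phi_mem_Ioo _).2
        (Phi_mem_Ioo _).2.le⟩
  calc l * (∫ x, F x ∂γ E - t) = ∫ x, -w x ∂γ E := by
        simp only [w, ← mul_neg, neg_sub]
        rw [integral_const_mul, integral_sub hFint (integrable_const t)]
        simp
    _ ≤ ∫ x, gaussianExcess (w x) ∂γ E := by
        refine integral_mono ?_ ?_ fun x => neg_le_gaussianExcess (w x)
        · exact (Integrable.of_bound hwc.aestronglyMeasurable _ (Eventually.of_forall hwC)).neg
        · exact integrable_comp_of_continuousOn_Icc continuous_gaussianExcess.continuousOn hwc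
            fun x => abs_le.1 (hwC x)
    _ ≤ √(1 + l ^ 2) * excessProfile (∫ x, Phi (w x) ∂γ E) := integral_gaussianExcess_le hw hwC
    _ ≤ √(1 + l ^ 2) * excessProfile (Phi (l * t) * Phi a) := by
        gcongr
        exact antitoneOn_excessProfile hprod
          (integral_mem_Ioo (by fun_prop) fun _ => Phi_mem_Ioo _) hmean

theorem integral_le_gaussianExcess_of_bounded (hF : LipschitzWith 1 F) (hC : ∀ x, |F x| ≤ C)
    (ha : Phi a ≤ (γ E).real {x | F x ≤ 0}) : ∫ x, F x ∂γ E ≤ gaussianExcess a := by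
  refine le_of_forall_pos_le_add fun t ht => ?_
  have hlevel : Tendsto (fun l : ℕ => excessProfile (Phi (l * t) * Phi a)) atTop
      (𝓝 (gaussianExcess a)) := by
    have hprod : Tendsto (fun l : ℕ => Phi (l * t) * Phi a) atTop (𝓝 (Phi a)) := by
      simpa using (tendsto_Phi_atTop.comp
        (tendsto_natCast_atTop_atTop.atTop_mul_const ht)).mul_const (Phi a)
    rw [← excessProfile_Phi]
    exact (hasDerivAt_excessProfile (Phi_mem_Ioo a)).continuousAt.tendsto.comp hprod
  have hratio : Tendsto (fun l : ℕ => √(1 + (l : ℝ) ^ 2) / l) atTop (𝓝 1) := by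
    have hinv : Tendsto (fun l : ℕ => √((l : ℝ)⁻¹ ^ 2 + 1)) atTop (𝓝 1) := by
      simpa using (((tendsto_inv_atTop_nhds_zero_nat (𝕜 := ℝ)).pow 2).add_const 1).sqrt
    refine hinv.congr' ((eventually_gt_atTop 0).mono fun l hl => ?_)
    have hl' : (0 : ℝ) < l := Nat.cast_pos.2 hl
    rw [eq_div_iff hl'.ne', ← Real.sqrt_sq hl'.le, ← Real.sqrt_mul (by positivity)]
    congr 1
    rw [Real.sqrt_sq hl'.le]
    field_simp
  rw [← sub_le_iff_le_add]
  refine ge_of_tendsto (by simpa using hratio.mul hlevel) ?_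
  filter_upwards [eventually_gt_atTop 0] with l hl
  have hl' : (0 : ℝ) < l := Nat.cast_pos.2 hl
  rw [div_mul_eq_mul_div, le_div_iff₀' hl']
  exact mul_integral_sub_le (l := l) hF hC ha

theorem integrable_stdGaussian_of_lipschitzWith {K : NNReal} (hF : LipschitzWith K F) :
    Integrable F (γ E) := by
  have hnorm : Integrable (fun x : E => ‖x‖) (γ E) :=
    ((IsGaussian.memLp_id (γ E) 1 (by simp)).integrable le_rfl).norm
  refine ((integrable_const |F 0|).add (hnorm.const_mul K)).mono' hF.continuous.aestronglyMeasurable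
    (Eventually.of_forall fun x => ?_)
  calc ‖F x‖ ≤ ‖F 0‖ + ‖F x - F 0‖ := norm_le_norm_add_norm_sub' _ _
    _ ≤ |F 0| + K * ‖x‖ := by simpa using hF.norm_sub_le x 0

theorem integral_le_gaussianExcess (hF : LipschitzWith 1 F)
    (ha : Phi a ≤ (γ E).real {x | F x ≤ 0}) : ∫ x, F x ∂γ E ≤ gaussianExcess a := by
  have hbound (n : ℕ) (x : E) : |max (-n : ℝ) (min (F x) n)| ≤ n :=
    abs_le.2 ⟨le_max_left _ _, max_le (by linarith [n.cast_nonneg (α := ℝ)]) (min_le_right _ _)⟩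
  have hdominated (n : ℕ) (x : E) : ‖max (-n : ℝ) (min (F x) n)‖ ≤ ‖F x‖ := by
    rw [Real.norm_eq_abs, Real.norm_eq_abs]
    have := n.cast_nonneg (α := ℝ)
    refine abs_le.2 ⟨le_max_of_le_right (le_min (neg_abs_le _) ?_),
      max_le ?_ (min_le_of_left_le (le_abs_self _))⟩ <;> linarith [abs_nonneg (F x)]
  have hlim : Tendsto (fun n : ℕ => ∫ x, max (-n : ℝ) (min (F x) n) ∂γ E) atTop
      (𝓝 (∫ x, F x ∂γ E)) := by
    refine tendsto_integral_of_dominated_convergence _ (fun n => ?_)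
      (integrable_stdGaussian_of_lipschitzWith hF).norm
      (fun n => Eventually.of_forall (hdominated n)) (Eventually.of_forall fun x => ?_)
    · have := hF.continuous
      fun_prop
    · refine tendsto_const_nhds.congr' ?_
      filter_upwards [eventually_ge_atTop ⌈|F x|⌉₊] with n hn
      have := abs_le.1 (Nat.ceil_le.1 hn)
      rw [min_eq_left this.2, max_eq_right this.1]
  refine le_of_tendsto' hlim fun n => integral_le_gaussianExcess_of_bounded
    ((hF.min_const _).const_max _) (hbound n) (ha.trans (measureReal_mono fun x hx => ?_))
  exact max_le (neg_nonpos.2 n.cast_nonneg) (min_le_of_left_le (show F x ≤ 0 from hx))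

theorem integral_infDist_le_gaussianExcess {A : Set E} (ha : Phi a ≤ (γ E).real A) :
    ∫ x, Metric.infDist x A ∂γ E ≤ gaussianExcess a :=
  integral_le_gaussianExcess (Metric.lipschitz_infDist_pt A) (ha.trans (measureReal_mono fun x hx =>
    (Metric.infDist_zero_of_mem hx).le))

end

/-! ### Cells -/

section

variable {d : ℕ}

theorem distSet_eq_infDist (z : Fin d → ℝ) (A : Set (Fin d → ℝ)) :
    distSet z A = Metric.infDist (WithLp.toLp 2 z) (WithLp.ofLp (p := 2) ⁻¹' A) := by
  have hl2 (x : Fin d → ℝ) : l2 x = ‖WithLp.toLp 2 x‖ := by simp [l2, EuclideanSpace.norm_eq]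
  have hset : {t | ∃ z' ∈ A, t = l2 (z - z')} =
      range fun y : (WithLp.ofLp (p := 2) ⁻¹' A : Set (EuclideanSpace ℝ (Fin d))) =>
        dist (WithLp.toLp 2 z) y.1 := by
    ext t
    constructor
    · rintro ⟨z', hz', rfl⟩
      exact ⟨⟨WithLp.toLp 2 z', hz'⟩, by simp only [hl2, WithLp.toLp_sub, dist_eq_norm]⟩
    · rintro ⟨⟨y, hy⟩, rfl⟩
      exact ⟨y.ofLp, hy, by simp only [hl2, WithLp.toLp_sub, dist_eq_norm]⟩
  rw [distSet, hset, Metric.infDist_eq_iInf, iInf]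

theorem distSet_eq_zero_of_mem {z : Fin d → ℝ} {A : Set (Fin d → ℝ)} (hz : z ∈ A) :
    distSet z A = 0 := by
  rw [distSet_eq_infDist]
  exact Metric.infDist_zero_of_mem hz

theorem stdGaussian_map_toLp : (_root_.stdGaussian d).map (WithLp.toLp 2) =
    γ (EuclideanSpace ℝ (Fin d)) :=
  map_pi_eq_stdGaussian

instance isProbabilityMeasure_stdGaussian : IsProbabilityMeasure (_root_.stdGaussian d) := by
  unfold _root_.stdGaussian; infer_instance

theorem stdGaussian_real_preimage_ofLp (A : Set (Fin d → ℝ)) :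
    (γ (EuclideanSpace ℝ (Fin d))).real (WithLp.ofLp (p := 2) ⁻¹' A) =
      (_root_.stdGaussian d).real A := by
  rw [← stdGaussian_map_toLp, Measure.real, ← MeasurableEquiv.coe_toLp,
    MeasurableEquiv.map_apply]
  rfl

theorem integrable_distSet (A : Set (Fin d → ℝ)) :
    Integrable (fun z => distSet z A) (_root_.stdGaussian d) := by
  have hint := integrable_stdGaussian_of_lipschitzWith (Metric.lipschitz_infDist_pt
    (WithLp.ofLp (p := 2) ⁻¹' A : Set (EuclideanSpace ℝ (Fin d))))
  rw [← stdGaussian_map_toLp] at hint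
  simpa only [Function.comp_def, ← distSet_eq_infDist] using
    hint.comp_measurable (by fun_prop)

theorem integral_distSet_le_gaussianExcess {A : Set (Fin d → ℝ)} {a : ℝ}
    (ha : Phi a ≤ (_root_.stdGaussian d).real A) :
    ∫ z, distSet z A ∂(_root_.stdGaussian d) ≤ gaussianExcess a := by
  have hbound := integral_infDist_le_gaussianExcess
    (ha.trans_eq (stdGaussian_real_preimage_ofLp A).symm)
  rw [← stdGaussian_map_toLp, integral_map (by fun_prop)
    (Metric.continuous_infDist_pt _).aestronglyMeasurable] at hbound
  simpa only [← distSet_eq_infDist] using hbound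

theorem distSet_compl_cell_eq_sum {ι : Type*} [Fintype ι] {B : ι → Set (Fin d → ℝ)}
    (hdisj : Pairwise (Function.onFun Disjoint B)) (z : Fin d → ℝ) :
    distSet z {z' | ∀ i, z ∈ B i → z' ∉ B i} = ∑ i, distSet z (B i)ᶜ := by
  by_cases hz : ∃ i, z ∈ B i
  · obtain ⟨i, hi⟩ := hz
    have huniq (j : ι) (hj : z ∈ B j) : j = i :=
      hdisj.eq (not_disjoint_iff.2 ⟨z, hj, hi⟩)
    have hcell : {z' | ∀ j, z ∈ B j → z' ∉ B j} = (B i)ᶜ :=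
      Subset.antisymm (fun z' h => h i hi) fun z' h j hj => huniq j hj ▸ h
    rw [hcell, Finset.sum_eq_single i
      (fun j _ hji => distSet_eq_zero_of_mem (mem_compl fun hj => hji (huniq j hj)))
      fun h => absurd (Finset.mem_univ i) h]
  · rw [not_exists] at hz
    rw [distSet_eq_zero_of_mem (mem_ofPred.2 fun i hi => absurd hi (hz i)),
      Finset.sum_eq_zero fun i _ => distSet_eq_zero_of_mem (hz i)]

end

theorem expected_latent_robustness_bound_general {d : ℕ} {ι : Type*} [Fintype ι]
    (B : ι → Set (Fin d → ℝ)) (hdisj : Pairwise (Function.onFun Disjoint B)) (a : ι → ℝ)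
    (ha : ∀ i, Phi (a i) ≤ (_root_.stdGaussian d).real (B i)ᶜ) :
    (∫ z, distSet z {z' | ∀ i, z ∈ B i → z' ∉ B i} ∂(_root_.stdGaussian d)) ≤
      ∑ i, (-(a i) * Phi (-(a i)) + Real.exp (-(a i) ^ 2 / 2) / Real.sqrt (2 * π)) := by
  simp only [distSet_compl_cell_eq_sum hdisj]
  rw [integral_finsetSum _ fun i _ => integrable_distSet _]
  refine Finset.sum_le_sum fun i _ => (integral_distSet_le_gaussianExcess (ha i)).trans_eq ?_
  rw [gaussianExcess, gaussianPDFReal_zero_one_apply, inv_mul_eq_div]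

/-- Bound on the expected latent-space robustness (used in Theorem 4). -/
theorem expected_latent_robustness_bound (d K : ℕ)
    (B : Fin K → Set (Fin d → ℝ))
    (hmeas : ∀ i, MeasurableSet (B i))
    (hdisj : Pairwise (Function.onFun Disjoint B))
    (hcover : (⋃ i, B i) = Set.univ)
    (a : Fin K → ℝ)
    (ha : ∀ i, Phi (a i) = ((stdGaussian d) (⋃ j, ⋃ _ : j ≠ i, B j)).toReal) :
    (∫ z, distSet z {z' | ∀ i, z ∈ B i → z' ∉ B i} ∂(stdGaussian d)) ≤
      ∑ i, (-(a i) * Phi (-(a i)) + Real.exp (-(a i) ^ 2 / 2) / Real.sqrt (2 * π)) :=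
  expected_latent_robustness_bound_general B hdisj a fun i => (ha i).trans_le
    (measureReal_mono (iUnion₂_subset fun _ hj => (hdisj hj).subset_compl_right))
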